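/- arXiv:1404.3327 — 2 statements merged into one kernel-verified Lean document; each statement's English description precedes it below -/
import Mathlib

section
/- Let ι be a nonempty finite index type, A : Matrix ι ι ℝ an entrywise nonnegative matrix, σ s : ℝ, and w : ι → ℝ a σ-suitable vector for A with s > σ. Let μ = max over k of (σ - A k k)/(s - A k k). If x̄ : ι → ℝ satisfies (s • 1 - A).mulVec x̄ = b, and x' is obtained from x : ι → ℝ by a step-asynchronous SOR update for the system (s • 1 - A) x = b with relaxation parameter ω = 1 (step-asynchronous Gauß–Seidel), then ‖x̄ - x'‖_w ≤ (μ/(1-μ)) · ‖x' - x‖_w. -/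
open Finset

/-- The `w`-norm of a vector `x`: the maximum over `i` of `|x i| / w i`. -/
noncomputable def wNorm {ι : Type*} [Fintype ι] [Nonempty ι] (w x : ι → ℝ) : ℝ :=
  Finset.univ.sup' Finset.univ_nonempty (fun i => |x i| / w i)

/-!
Put `E = ‖xbar - x'‖_w` and `D = ‖x' - x‖_w`. Coordinate `i` of `x'` solves row `i` of the system
with the other coordinates taken from a mixture of `x'` and `x`, and every such mixture is within
`E + D` of `xbar`. Solving one row contracts `w`-norm errors by the factor `μ`, so
`E ≤ μ * (E + D)`, which is then solved for `E`.
-/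

section FinsetSum

variable {ι R : Type*}

theorem abs_sum_mul_le_mul_sum_abs_mul [CommRing R] [LinearOrder R] [IsStrictOrderedRing R]
    {T : Finset ι} {a z w : ι → R} {C : R} (hz : ∀ j ∈ T, |z j| ≤ C * w j) :
    |∑ j ∈ T, a j * z j| ≤ C * ∑ j ∈ T, |a j| * w j :=
  calc |∑ j ∈ T, a j * z j|
      ≤ ∑ j ∈ T, |a j * z j| := abs_sum_le_sum_abs _ _
    _ ≤ ∑ j ∈ T, C * (|a j| * w j) := sum_le_sum fun j hj => by
        rw [abs_mul, mul_left_comm]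
        exact mul_le_mul_of_nonneg_left (hz j hj) (abs_nonneg _)
    _ = C * ∑ j ∈ T, |a j| * w j := (mul_sum _ _ _).symm

theorem sum_erase_mul_piecewise [Fintype ι] [DecidableEq ι] [NonUnitalNonAssocSemiring R]
    {S : Finset ι} {i : ι} (hi : i ∉ S) (a y x : ι → R) :
    ∑ j ∈ univ.erase i, a j * S.piecewise y x j =
      ∑ j ∈ S, a j * y j + ∑ j ∈ univ.filter (fun j => j ∉ S ∧ j ≠ i), a j * x j := by
  have h_inter : univ.erase i ∩ S = S :=
    inter_eq_right.2 fun j hj => mem_erase.2 ⟨ne_of_mem_of_not_mem hj hi, mem_univ j⟩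
  have h_sdiff : univ.erase i \ S = univ.filter (fun j => j ∉ S ∧ j ≠ i) := by
    ext j
    simp [and_comm]
  have h_mul : ∀ j, a j * S.piecewise y x j =
      S.piecewise (fun j => a j * y j) (fun j => a j * x j) j :=
    fun j => apply_ite (a j * ·) (j ∈ S) (y j) (x j)
  simp only [h_mul, sum_piecewise, h_inter, h_sdiff]

end FinsetSum

section Row

variable {ι R : Type*} [Fintype ι] [DecidableEq ι]

theorem mulVec_apply_eq_diag_add_sum_erase [NonUnitalNonAssocSemiring R]
    (A : Matrix ι ι R) (v : ι → R) (i : ι) :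
    A.mulVec v i = A i i * v i + ∑ j ∈ univ.erase i, A i j * v j :=
  (add_sum_erase _ _ (mem_univ i)).symm

theorem smul_one_sub_mulVec_apply [CommRing R] (A : Matrix ι ι R) (s : R) (v : ι → R) (i : ι) :
    (s • (1 : Matrix ι ι R) - A).mulVec v i =
      (s - A i i) * v i - ∑ j ∈ univ.erase i, A i j * v j := by
  rw [Matrix.sub_mulVec, Matrix.smul_mulVec, Matrix.one_mulVec, Pi.sub_apply, Pi.smul_apply,
    smul_eq_mul, mulVec_apply_eq_diag_add_sum_erase, sub_mul, sub_add_eq_sub_sub]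

end Row

/-- `σ`-suitability of `w` for a matrix with entries of arbitrary sign: the off-diagonal entries
enter through their absolute values, the diagonal ones as they are. If the off-diagonal entries are
nonnegative, the row condition is `(A.mulVec w) i ≤ σ * w i`. -/
structure AbsSuitable {ι 𝕜 : Type*} [Fintype ι] [DecidableEq ι]
    [Field 𝕜] [LinearOrder 𝕜] [IsStrictOrderedRing 𝕜]
    (A : Matrix ι ι 𝕜) (σ : 𝕜) (w : ι → 𝕜) : Prop where
  pos : ∀ i, 0 < w i
  row_le : ∀ i, A i i * w i + ∑ j ∈ univ.erase i, |A i j| * w j ≤ σ * w i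

namespace AbsSuitable

variable {ι 𝕜 : Type*} [Fintype ι] [DecidableEq ι]
  [Field 𝕜] [LinearOrder 𝕜] [IsStrictOrderedRing 𝕜]
  {A : Matrix ι ι 𝕜} {σ s μ : 𝕜} {w : ι → 𝕜}

theorem of_offDiag_nonneg (hA : ∀ i j, j ≠ i → 0 ≤ A i j) (hw : ∀ i, 0 < w i)
    (hsuit : ∀ i, A.mulVec w i ≤ σ * w i) : AbsSuitable A σ w where
  pos := hw
  row_le i := by
    have h_abs : ∑ j ∈ univ.erase i, |A i j| * w j = ∑ j ∈ univ.erase i, A i j * w j :=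
      sum_congr rfl fun j hj => by rw [abs_of_nonneg (hA i j (ne_of_mem_erase hj))]
    rw [h_abs, ← mulVec_apply_eq_diag_add_sum_erase]
    exact hsuit i

theorem sum_erase_le (h : AbsSuitable A σ w) (i : ι) :
    ∑ j ∈ univ.erase i, |A i j| * w j ≤ (σ - A i i) * w i := by
  linarith [h.row_le i]

theorem diag_le (h : AbsSuitable A σ w) (i : ι) : A i i ≤ σ := by
  have h_sum : 0 ≤ ∑ j ∈ univ.erase i, |A i j| * w j :=
    sum_nonneg fun j _ => mul_nonneg (abs_nonneg _) (h.pos j).le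
  exact sub_nonneg.1 (nonneg_of_mul_nonneg_left (h_sum.trans (h.sum_erase_le i)) (h.pos i))

theorem sub_diag_pos (h : AbsSuitable A σ w) (hs : σ < s) (i : ι) : 0 < s - A i i :=
  sub_pos.2 ((h.diag_le i).trans_lt hs)

theorem sup'_diag_ratio_lt_one [Nonempty ι] (h : AbsSuitable A σ w) (hs : σ < s) :
    univ.sup' univ_nonempty (fun k => (σ - A k k) / (s - A k k)) < 1 :=
  (sup'_lt_iff _).2 fun k _ =>
    (div_lt_one (h.sub_diag_pos hs k)).2 (sub_lt_sub_right hs _)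

theorem abs_row_solution_le (h : AbsSuitable A σ w) (hs : σ < s) {i : ι}
    (hμ : (σ - A i i) / (s - A i i) ≤ μ) {z : ι → 𝕜} {u C : 𝕜} (hz : ∀ j, |z j| ≤ C * w j)
    (hu : (s - A i i) * u = ∑ j ∈ univ.erase i, A i j * z j) :
    |u| ≤ μ * C * w i := by
  have h_pos : 0 < s - A i i := h.sub_diag_pos hs i
  have hC : 0 ≤ C := nonneg_of_mul_nonneg_left ((abs_nonneg _).trans (hz i)) (h.pos i)
  have h_diag : σ - A i i ≤ μ * (s - A i i) := (div_le_iff₀ h_pos).1 hμ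
  refine le_of_mul_le_mul_left ?_ h_pos
  calc (s - A i i) * |u|
      = |∑ j ∈ univ.erase i, A i j * z j| := by rw [← hu, abs_mul, abs_of_pos h_pos]
    _ ≤ C * ∑ j ∈ univ.erase i, |A i j| * w j :=
        abs_sum_mul_le_mul_sum_abs_mul fun j _ => hz j
    _ ≤ C * ((σ - A i i) * w i) := mul_le_mul_of_nonneg_left (h.sum_erase_le i) hC
    _ ≤ C * (μ * (s - A i i) * w i) :=
        mul_le_mul_of_nonneg_left (mul_le_mul_of_nonneg_right h_diag (h.pos i).le) hC
    _ = (s - A i i) * (μ * C * w i) := by ring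

end AbsSuitable

section WNorm

variable {ι : Type*} [Fintype ι] [Nonempty ι] {w : ι → ℝ}

theorem wNorm_le_iff (hw : ∀ i, 0 < w i) {x : ι → ℝ} {C : ℝ} :
    wNorm w x ≤ C ↔ ∀ i, |x i| ≤ C * w i := by
  simp only [wNorm, sup'_le_iff, mem_univ, true_imp_iff, div_le_iff₀ (hw _)]

theorem abs_le_wNorm_mul (hw : ∀ i, 0 < w i) (x : ι → ℝ) (i : ι) : |x i| ≤ wNorm w x * w i :=
  (wNorm_le_iff hw).1 le_rfl i

theorem wNorm_nonneg (hw : ∀ i, 0 < w i) (x : ι → ℝ) : 0 ≤ wNorm w x := by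
  obtain ⟨i⟩ := ‹Nonempty ι›
  exact nonneg_of_mul_nonneg_left ((abs_nonneg _).trans (abs_le_wNorm_mul hw x i)) (hw i)

theorem abs_sub_piecewise_le [DecidableEq ι] (hw : ∀ i, 0 < w i) (S : Finset ι)
    (z y x : ι → ℝ) (j : ι) :
    |z j - S.piecewise y x j| ≤ (wNorm w (z - y) + wNorm w (y - x)) * w j := by
  have h_zy : |z j - y j| ≤ wNorm w (z - y) * w j := abs_le_wNorm_mul hw (z - y) j
  have h_yx : |y j - x j| ≤ wNorm w (y - x) * w j := abs_le_wNorm_mul hw (y - x) j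
  rw [add_mul]
  by_cases hj : j ∈ S
  · rw [S.piecewise_eq_of_mem _ _ hj]
    exact h_zy.trans (le_add_of_nonneg_right (mul_nonneg (wNorm_nonneg hw _) (hw j).le))
  · rw [S.piecewise_eq_of_notMem _ _ hj]
    exact (abs_sub_le _ _ _).trans (add_le_add h_zy h_yx)

end WNorm

section GaussSeidel

variable {ι : Type*} [Fintype ι] [DecidableEq ι]

theorem gaussSeidel_row_error {𝕜 : Type*} [Field 𝕜] {A : Matrix ι ι 𝕜} {s : 𝕜}
    {b xbar x x' : ι → 𝕜} {S : Finset ι} {i : ι} (hdiag : s - A i i ≠ 0)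
    (hxbar : (s • (1 : Matrix ι ι 𝕜) - A).mulVec xbar i = b i) (hi : i ∉ S)
    (hupd : x' i = (b i + ∑ j ∈ S, A i j * x' j
      + ∑ j ∈ univ.filter (fun j => j ∉ S ∧ j ≠ i), A i j * x j) / (s - A i i)) :
    (s - A i i) * (xbar - x') i =
      ∑ j ∈ univ.erase i, A i j * (xbar j - S.piecewise x' x j) := by
  rw [smul_one_sub_mulVec_apply] at hxbar
  rw [add_assoc, ← sum_erase_mul_piecewise hi, eq_div_iff hdiag] at hupd
  simp only [mul_sub, sum_sub_distrib, Pi.sub_apply]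
  linear_combination hxbar - hupd

theorem stepAsyncGaussSeidel_aposteriori_bound_general [Nonempty ι]
    {A : Matrix ι ι ℝ} {σ s : ℝ} {w b xbar x x' : ι → ℝ}
    (hsuit : AbsSuitable A σ w) (hs : σ < s) {μ : ℝ}
    (hμ : μ = univ.sup' univ_nonempty (fun k => (σ - A k k) / (s - A k k)))
    (hxbar : (s • (1 : Matrix ι ι ℝ) - A).mulVec xbar = b)
    {N : ι → Finset ι} (hN : ∀ i, i ∉ N i)
    (hupd : ∀ i, x' i = (b i + ∑ j ∈ N i, A i j * x' j
      + ∑ j ∈ univ.filter (fun j => j ∉ N i ∧ j ≠ i), A i j * x j) / (s - A i i)) :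
    wNorm w (xbar - x') ≤ (μ / (1 - μ)) * wNorm w (x' - x) := by
  have hμ_lt : μ < 1 := hμ ▸ hsuit.sup'_diag_ratio_lt_one hs
  have h_ratio_le : ∀ i, (σ - A i i) / (s - A i i) ≤ μ := fun i =>
    hμ ▸ le_sup' (fun k => (σ - A k k) / (s - A k k)) (mem_univ i)
  have h_contraction :
      wNorm w (xbar - x') ≤ μ * (wNorm w (xbar - x') + wNorm w (x' - x)) :=
    (wNorm_le_iff hsuit.pos).2 fun i =>
      hsuit.abs_row_solution_le hs (h_ratio_le i)
        (abs_sub_piecewise_le hsuit.pos (N i) xbar x' x)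
        (gaussSeidel_row_error (hsuit.sub_diag_pos hs i).ne' (congrFun hxbar i) (hN i) (hupd i))
  rw [div_mul_eq_mul_div, le_div_iff₀ (sub_pos.2 hμ_lt)]
  linarith

end GaussSeidel

theorem stepAsyncGaussSeidel_aposteriori_bound
    {ι : Type*} [Fintype ι] [Nonempty ι] [DecidableEq ι]
    (A : Matrix ι ι ℝ) (σ s : ℝ) (w b xbar x x' : ι → ℝ)
    (hA : ∀ i j, 0 ≤ A i j)
    (hw : ∀ i, 0 < w i)
    (hsuit : ∀ i, A.mulVec w i ≤ σ * w i)
    (hs : σ < s)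
    (μ : ℝ)
    (hμ : μ = Finset.univ.sup' Finset.univ_nonempty (fun k => (σ - A k k) / (s - A k k)))
    (hxbar : (s • (1 : Matrix ι ι ℝ) - A).mulVec xbar = b)
    (N : ι → Finset ι) (rnk : ι → ℕ)
    (hrank : ∀ i j, j ∈ N i → rnk j < rnk i)
    (hupd : ∀ i, x' i = (1 - (1 : ℝ)) * x i + ((1 : ℝ) / (s - A i i)) *
      (b i + ∑ j ∈ N i, A i j * x' j
           + ∑ j ∈ Finset.univ.filter (fun j => j ∉ N i ∧ j ≠ i), A i j * x j)) :
    wNorm w (xbar - x') ≤ (μ / (1 - μ)) * wNorm w (x' - x) :=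
  stepAsyncGaussSeidel_aposteriori_bound_general
    (.of_offDiag_nonneg (fun i j _ => hA i j) hw hsuit) hs hμ hxbar
    (fun i hi => (hrank i i hi).false) fun i => (hupd i).trans (by ring)
end

section
/- Let ι be a nonempty finite index type, A : Matrix ι ι ℝ an entrywise nonnegative matrix, and σ : ℝ with σ > ρ(A). Then there exists δ > 0 such that ρ(A + δ • J) = σ, where J : Matrix ι ι ℝ is the matrix all of whose entries equal 1. -/
/-- Spectral radius of a real matrix: the maximum of the absolute values of
its complex eigenvalues. -/
noncomputable def specRad {ι : Type*} [Fintype ι] [DecidableEq ι] (A : Matrix ι ι ℝ) : ℝ :=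
  sSup ((fun z : ℂ => ‖z‖) '' spectrum ℂ (A.map (algebraMap ℝ ℂ)))

/-!
A nonnegative matrix with a strictly positive eigenvector `x` has the eigenvalue of `x` as its
spectral radius: after conjugation by `diagonal x` all its row sums equal that eigenvalue, and by
Gershgorin no eigenvalue exceeds the largest row sum. So, for `u` strictly positive and `v`
nonnegative and nonzero, it suffices to find `δ > 0` such that `A + δ u vᵀ` has a strictly positive
eigenvector for `σ`. Since `ρ(A) < σ`, the Neumann series `x = ∑ₙ (A / σ)ⁿ u` converges. It
satisfies `x ≥ u > 0` and `A x + σ u = σ x`, so `x` is the desired eigenvector once `δ ⟨v, x⟩ = σ`.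
-/

open scoped Matrix ENNReal NNReal

theorem summable_smul_pow_of_lt_inv_spectralRadius {E : Type*} [NormedRing E] [NormedAlgebra ℂ E]
    [CompleteSpace E] {a : E} {z : ℂ} (hz : (‖z‖₊ : ℝ≥0∞) < (spectralRadius ℂ a)⁻¹) :
    Summable fun n : ℕ => (z • a) ^ n := by
  obtain ⟨r, hzr, hr⟩ := ENNReal.lt_iff_exists_nnreal_btwn.1 hz
  have hr₀ : 0 < r := pos_of_gt (ENNReal.coe_lt_coe.1 hzr)
  -- The resolvent `(1 - w a)⁻¹` is holomorphic for `|w| ≤ r`, so its geometric power series,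
  -- a priori convergent for `|w| < ‖a‖⁻¹`, converges for `|w| < r`.
  have hseries := (spectrum.hasFPowerSeriesOnBall_inverse_one_sub_smul ℂ a).exchange_radius
    ((spectrum.differentiableOn_inverse_one_sub_smul hr).hasFPowerSeriesOnBall hr₀)
  have hsum := hseries.hasSum (y := z) (mem_eball_zero_iff.2 hzr)
  simpa [smul_pow] using hsum.summable

section Spectrum

variable {ι K : Type*} [Fintype ι] [DecidableEq ι] [Field K] {A : Matrix ι ι K} {μ : K}

theorem mem_spectrum_of_mulVec_eq_smul {x : ι → K} (hx : x ≠ 0) (h : A *ᵥ x = μ • x) :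
    μ ∈ spectrum K A := by
  rw [← Matrix.spectrum_toLin']
  exact (Module.End.hasEigenvalue_of_hasEigenvector
    ⟨Module.End.mem_eigenspace_iff.2 h, hx⟩).mem_spectrum

theorem map_mem_spectrum_map {L : Type*} [CommRing L] [Nontrivial L] (f : K →+* L)
    (h : μ ∈ spectrum K A) : f μ ∈ spectrum L (A.map f) := by
  apply Matrix.mem_spectrum_of_isRoot_charpoly
  rw [Matrix.charpoly_map]
  exact (Matrix.mem_spectrum_iff_isRoot_charpoly.1 h).map

end Spectrum

section Gershgorin

variable {ι K : Type*} [Fintype ι] [DecidableEq ι] [NormedField K] {A : Matrix ι ι K} {μ : K}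

theorem exists_norm_le_sum_norm_of_mem_spectrum (hμ : μ ∈ spectrum K A) :
    ∃ k, ‖μ‖ ≤ ∑ j, ‖A k j‖ := by
  rw [← Matrix.spectrum_toLin', ← Module.End.hasEigenvalue_iff_mem_spectrum] at hμ
  obtain ⟨k, hk⟩ := eigenvalue_mem_ball hμ
  refine ⟨k, (norm_le_norm_add_norm_sub' μ (A k k)).trans ?_⟩
  rw [← Finset.add_sum_erase _ _ (Finset.mem_univ k)]
  gcongr
  exact mem_closedBall_iff_norm.1 hk

theorem exists_norm_mul_le_sum_norm_mul_of_mem_spectrum (hμ : μ ∈ spectrum K A) (d : ι → Kˣ) :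
    ∃ k, ‖μ‖ * ‖(d k : K)‖ ≤ ∑ j, ‖A k j‖ * ‖(d j : K)‖ := by
  let D : (Matrix ι ι K)ˣ :=
    { val := Matrix.diagonal fun i => (d i : K)
      inv := Matrix.diagonal fun i => (d i : K)⁻¹
      val_inv := by simp
      inv_val := by simp }
  have hD (i j : ι) : (D⁻¹ * A * D : Matrix ι ι K) i j = (d i : K)⁻¹ * A i j * d j := by
    rw [Matrix.mul_diagonal, Units.inv_mk, Matrix.diagonal_mul]
  rw [← spectrum.units_conjugate' (u := D)] at hμ
  obtain ⟨k, hk⟩ := exists_norm_le_sum_norm_of_mem_spectrum hμ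
  refine ⟨k, ?_⟩
  have hdk : 0 < ‖(d k : K)‖ := norm_pos_iff.2 (d k).ne_zero
  simp_rw [hD, norm_mul, norm_inv, mul_assoc, ← Finset.mul_sum] at hk
  rwa [← div_eq_inv_mul, le_div_iff₀ hdk] at hk

end Gershgorin

section NeumannSeries

variable {ι R : Type*} [Fintype ι] [DecidableEq ι] [TopologicalSpace R]

theorem mulVec_tsum_pow_mulVec_add [Ring R] [IsTopologicalRing R] [T2Space R]
    {B : Matrix ι ι R} (hB : Summable (B ^ ·)) (u : ι → R) :
    B *ᵥ ((∑' n, B ^ n) *ᵥ u) + u = (∑' n, B ^ n) *ᵥ u := by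
  have h : (1 - B) *ᵥ ((∑' n, B ^ n) *ᵥ u) = u := by
    rw [Matrix.mulVec_mulVec, hB.one_sub_mul_tsum_pow, Matrix.one_mulVec]
  rw [Matrix.sub_mulVec, Matrix.one_mulVec] at h
  exact (sub_eq_iff_eq_add'.1 h).symm

theorem le_tsum_pow_mulVec [Semiring R] [PartialOrder R] [IsOrderedRing R]
    [IsTopologicalSemiring R] [OrderClosedTopology R] {B : Matrix ι ι R}
    (hB : ∀ i j, 0 ≤ B i j) (hsum : Summable (B ^ ·)) {u : ι → R} (hu : 0 ≤ u) :
    u ≤ (∑' n, B ^ n) *ᵥ u := by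
  have h : HasSum (fun n => B ^ n *ᵥ u) ((∑' n, B ^ n) *ᵥ u) :=
    hsum.hasSum.map (Matrix.mulVec.addMonoidHomLeft u)
      (continuous_id.matrix_mulVec continuous_const)
  have hnonneg (n : ℕ) : 0 ≤ B ^ n *ᵥ u := fun i =>
    dotProduct_nonneg_of_nonneg (Matrix.pow_apply_nonneg hB n i) hu
  simpa using le_hasSum h 0 fun n _ => hnonneg n

end NeumannSeries

section SpectralRadius

attribute [local instance] Matrix.linftyOpNormedRing Matrix.linftyOpNormedAlgebra

variable {ι : Type*} [Fintype ι] [DecidableEq ι] {A : Matrix ι ι ℝ} {σ : ℝ}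

theorem norm_le_specRad {z : ℂ} (hz : z ∈ spectrum ℂ (A.map (algebraMap ℝ ℂ))) :
    ‖z‖ ≤ specRad A :=
  le_csSup ((spectrum.isCompact (𝕜 := ℂ) _).image continuous_norm).bddAbove ⟨z, hz, rfl⟩

theorem specRad_nonneg (A : Matrix ι ι ℝ) : 0 ≤ specRad A :=
  Real.sSup_nonneg (Set.forall_mem_image.2 fun _ _ => norm_nonneg _)

theorem summable_inv_smul_pow_of_specRad_lt [Nonempty ι] (hσ : specRad A < σ) :
    Summable fun n : ℕ => (σ⁻¹ • A) ^ n := by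
  have hσ₀ : 0 < σ := (specRad_nonneg A).trans_lt hσ
  lift σ to ℝ≥0 using hσ₀.le
  have hρ : spectralRadius ℂ (A.map (algebraMap ℝ ℂ)) < σ :=
    spectrum.spectralRadius_lt_of_forall_lt _ fun z hz => (norm_le_specRad hz).trans_lt hσ
  have hsum : Summable fun n : ℕ => ((σ : ℂ)⁻¹ • A.map (algebraMap ℝ ℂ)) ^ n := by
    refine summable_smul_pow_of_lt_inv_spectralRadius ?_
    rw [ENNReal.lt_inv_iff_lt_inv]
    simpa [ENNReal.coe_inv (NNReal.coe_pos.1 hσ₀).ne'] using hρ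
  have hsmul : (σ : ℂ)⁻¹ • A.map (algebraMap ℝ ℂ) =
      (algebraMap ℝ ℂ).mapMatrix ((σ : ℝ)⁻¹ • A) := by
    ext i j
    simp
  simp_rw [hsmul, ← map_pow] at hsum
  refine Pi.summable.2 fun i => Pi.summable.2 fun j => Complex.summable_ofReal.1 ?_
  exact Pi.summable.1 (Pi.summable.1 hsum i) j

theorem norm_le_of_mem_spectrum_of_mulVec_le (hA : ∀ i j, 0 ≤ A i j) {x : ι → ℝ}
    (hx : ∀ i, 0 < x i) (hAx : A *ᵥ x ≤ σ • x) {z : ℂ}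
    (hz : z ∈ spectrum ℂ (A.map (algebraMap ℝ ℂ))) : ‖z‖ ≤ σ := by
  obtain ⟨k, hk⟩ := exists_norm_mul_le_sum_norm_mul_of_mem_spectrum hz fun i =>
    Units.mk0 (x i : ℂ) (Complex.ofReal_ne_zero.2 (hx i).ne')
  refine le_of_mul_le_mul_right ?_ (hx k)
  calc ‖z‖ * x k ≤ ∑ j, A k j * x j := by
        simpa [abs_of_pos (hx _), abs_of_nonneg (hA _ _)] using hk
    _ ≤ σ * x k := hAx k

theorem specRad_eq_of_mulVec_eq_smul [Nonempty ι] (hA : ∀ i j, 0 ≤ A i j) {x : ι → ℝ}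
    (hx : ∀ i, 0 < x i) (hAx : A *ᵥ x = σ • x) : specRad A = σ := by
  have hx₀ : x ≠ 0 := fun h => (hx (Classical.arbitrary ι)).ne' (congrFun h _)
  have hσ : algebraMap ℝ ℂ σ ∈ spectrum ℂ (A.map (algebraMap ℝ ℂ)) :=
    map_mem_spectrum_map _ (mem_spectrum_of_mulVec_eq_smul hx₀ hAx)
  apply le_antisymm
  · exact csSup_le ⟨_, _, hσ, rfl⟩ (Set.forall_mem_image.2 fun _ hz =>
      norm_le_of_mem_spectrum_of_mulVec_le hA hx hAx.le hz)
  · calc σ ≤ ‖σ‖ := Real.le_norm_self σ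
      _ = ‖algebraMap ℝ ℂ σ‖ := (norm_algebraMap' ℂ σ).symm
      _ ≤ specRad A := norm_le_specRad hσ

theorem exists_rank_one_perturbation_with_spectral_radius_general
    (hA : ∀ i j, 0 ≤ A i j) (hσ : specRad A < σ) {u v : ι → ℝ} (hu : ∀ i, 0 < u i) (hv : 0 < v) :
    ∃ δ : ℝ, 0 < δ ∧ specRad (A + δ • Matrix.vecMulVec u v) = σ := by
  obtain ⟨hv₀, k, hk⟩ := Pi.lt_def.1 hv
  have : Nonempty ι := ⟨k⟩
  have hσ₀ : 0 < σ := (specRad_nonneg A).trans_lt hσ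
  have hsum := summable_inv_smul_pow_of_specRad_lt hσ
  set x : ι → ℝ := (∑' n : ℕ, (σ⁻¹ • A) ^ n) *ᵥ u
  have hx : ∀ i, 0 < x i := fun i => (hu i).trans_le
    (le_tsum_pow_mulVec (fun i j => mul_nonneg (inv_nonneg.2 hσ₀.le) (hA i j)) hsum
      (fun i => (hu i).le) i)
  have hAx : A *ᵥ x + σ • u = σ • x := by
    have hfix : (σ⁻¹ • A) *ᵥ x + u = x := mulVec_tsum_pow_mulVec_add hsum u
    conv_rhs => rw [← hfix, Matrix.smul_mulVec, smul_add, smul_inv_smul₀ hσ₀.ne']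
  have hvx : 0 < v ⬝ᵥ x := Finset.sum_pos' (fun i _ => mul_nonneg (hv₀ i) (hx i).le)
    ⟨k, Finset.mem_univ k, mul_pos hk (hx k)⟩
  have hδ : 0 < σ / (v ⬝ᵥ x) := div_pos hσ₀ hvx
  refine ⟨σ / (v ⬝ᵥ x), hδ, specRad_eq_of_mulVec_eq_smul (fun i j => ?_) hx ?_⟩
  · exact add_nonneg (hA i j) (mul_nonneg hδ.le (mul_nonneg (hu i).le (hv₀ j)))
  · rw [Matrix.add_mulVec, Matrix.smul_mulVec, Matrix.vecMulVec_mulVec, op_smul_eq_smul, smul_smul,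
      div_mul_cancel₀ _ hvx.ne', hAx]

end SpectralRadius

theorem exists_rank_one_perturbation_with_spectral_radius
    {ι : Type*} [Fintype ι] [Nonempty ι] [DecidableEq ι]
    (A : Matrix ι ι ℝ) (σ : ℝ)
    (hA : ∀ i j, 0 ≤ A i j)
    (hσ : specRad A < σ) :
    ∃ δ : ℝ, 0 < δ ∧
      specRad (A + δ • (Matrix.of fun _ _ => (1 : ℝ))) = σ := by
  simpa [Matrix.vecMulVec] using exists_rank_one_perturbation_with_spectral_radius_general hA hσ
    (u := 1) (v := 1) (fun _ => one_pos) one_pos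
end
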